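/- arXiv:2001.08813 — 2 statements merged into one kernel-verified Lean document; each statement's English description precedes it below -/
import Mathlib

section
/- For every P ∈ 𝒫(Z), B(P,ℰ) = H(P) − H(Π_P). -/
/-!
For `P` and `R` with the same mean and `P_θ` in the family, `B(P, P_θ) - B(R, P_θ) = H(P) - H(R)`,
because the gradient of `H` at `P_θ` is `⟨θ, f⟩` up to a constant. As `B(R, P_θ) ≥ 0`, this gives
`B(P, ℰ) ≥ H(P) - H(R)`. Conversely, if `R` minimizes `H` under the mean constraint, the minimax
theorem produces, for every `t < H(R)`, a multiplier `θ` such that `t < H(Q) - ⟨θ, μ(Q) - μ(R)⟩`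
for all `Q` in the simplex; at `Q = P_θ` this says `B(P, P_θ) < H(P) - t`.
-/

open Set Matrix

theorem convexOn_closure_of_continuousOn {E : Type*} [AddCommGroup E] [Module ℝ E]
    [TopologicalSpace E] [IsTopologicalAddGroup E] [ContinuousSMul ℝ E] {s : Set E} {g : E → ℝ}
    (hg : ConvexOn ℝ s g) (hgc : ContinuousOn g (closure s)) : ConvexOn ℝ (closure s) g := by
  refine ⟨hg.1.closure, fun x hx y hy a b ha hb hab ↦ ?_⟩
  have jensen_on_prod : ∀ p ∈ s ×ˢ s, g (a • p.1 + b • p.2) ≤ a • g p.1 + b • g p.2 :=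
    fun p hp ↦ hg.2 hp.1 hp.2 ha hb hab
  have hcomb : ContinuousOn (fun p : E × E ↦ g (a • p.1 + b • p.2)) (closure (s ×ˢ s)) := by
    refine hgc.comp (by fun_prop) fun p hp ↦ ?_
    rw [closure_prod_eq] at hp
    exact hg.1.closure hp.1 hp.2 ha hb hab
  have hfst : ContinuousOn (fun p : E × E ↦ g p.1) (closure (s ×ˢ s)) :=
    hgc.comp continuousOn_fst fun p hp ↦ (closure_prod_eq.subset hp).1
  have hsnd : ContinuousOn (fun p : E × E ↦ g p.2) (closure (s ×ˢ s)) :=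
    hgc.comp continuousOn_snd fun p hp ↦ (closure_prod_eq.subset hp).2
  exact le_on_closure jensen_on_prod hcomb ((hfst.const_smul a).add (hsnd.const_smul b))
    (closure_prod_eq.superset ⟨hx, hy⟩ : (x, y) ∈ closure (s ×ˢ s))

theorem tangent_le_of_convexOn {s : Set ℝ} {g : ℝ → ℝ} {x y g' : ℝ} (hg : ConvexOn ℝ s g)
    (hx : x ∈ s) (hy : y ∈ s) (hd : HasDerivAt g g' x) : g x + g' * (y - x) ≤ g y := by
  rcases lt_trichotomy x y with hxy | rfl | hyx
  · have := hg.le_slope_of_hasDerivAt hx hy hxy hd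
    rw [slope_def_field, le_div_iff₀ (sub_pos.2 hxy)] at this
    linarith
  · simp
  · have := hg.slope_le_of_hasDerivAt hy hx hyx hd
    rw [slope_def_field, div_le_iff₀ (sub_pos.2 hyx)] at this
    linarith

theorem exists_finite_forall_exists_lt {X ι α : Type*} [TopologicalSpace X] [Preorder α]
    {S : Set X} {g : ι → X → α} {t : α} (hS : IsCompact S)
    (hg : ∀ i, LowerSemicontinuousOn (g i) S) (ht : ∀ x ∈ S, ∃ i, t < g i x) :
    ∃ I : Set ι, I.Finite ∧ ∀ x ∈ S, ∃ i ∈ I, t < g i x := by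
  choose i hi using ht
  obtain ⟨T, hT⟩ := hS.elim_nhdsWithin_subcover' (fun x hx ↦ {y | t < g (i x hx) y})
    fun x hx ↦ hg (i x hx) x hx t (hi x hx)
  refine ⟨_, T.finite_toSet.image fun x : S ↦ i x x.2, fun y hy ↦ ?_⟩
  obtain ⟨x, hx, hxy⟩ := mem_iUnion₂.1 (hT hy)
  exact ⟨i x x.2, mem_image_of_mem _ hx, hxy⟩

section LagrangeMultiplier

variable {V F : Type*} [AddCommGroup V] [Module ℝ V] [AddCommGroup F] [Module ℝ F]

theorem exists_lt_sub_apply {φ : F →ₗ[ℝ] ℝ} {t h : ℝ} (ht : φ = 0 → t < h) :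
    ∃ θ, t < h - φ θ := by
  by_cases hφ : φ = 0
  · exact ⟨0, by simpa using ht hφ⟩
  · obtain ⟨θ, hθ⟩ : ∃ θ, φ θ ≠ 0 := DFunLike.ne_iff.1 hφ
    refine ⟨((h - t - 1) / φ θ) • θ, ?_⟩
    rw [map_smul, smul_eq_mul, div_mul_cancel₀ _ hθ]
    linarith

variable [TopologicalSpace V] [IsTopologicalAddGroup V] [ContinuousSMul ℝ V]
  [TopologicalSpace F] [IsTopologicalAddGroup F] [ContinuousSMul ℝ F]

theorem exists_forall_lt_sub_of_forall_fiber_lt {S : Set V} {H : V → ℝ}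
    {b : V →ₗ[ℝ] F →ₗ[ℝ] ℝ} {R : V} {t : ℝ} (hS : IsCompact S)
    (hH : ConvexOn ℝ S H) (hHc : LowerSemicontinuousOn H S)
    (hb_left : ∀ θ, Continuous fun Q ↦ b Q θ) (hb_right : ∀ Q, Continuous (b Q))
    (ht : ∀ Q ∈ S, b Q = b R → t < H Q) :
    ∃ θ, ∀ Q ∈ S, t < H Q - b (Q - R) θ := by
  rcases S.eq_empty_or_nonempty with rfl | hSne
  · exact ⟨0, by simp⟩
  have hlsc (θ : F) : LowerSemicontinuousOn (fun Q ↦ H Q - b (Q - R) θ) S := by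
    have : Continuous fun Q ↦ -b (Q - R) θ := by
      simp only [map_sub, LinearMap.sub_apply]
      exact ((hb_left θ).sub continuous_const).neg
    simpa only [sub_eq_add_neg] using hHc.add this.continuousOn.lowerSemicontinuousOn
  have hconvex (θ : F) : ConvexOn ℝ S fun Q ↦ H Q - b (Q - R) θ := by
    have := (hH.sub ((b.flip θ).concaveOn hH.1)).add_const (b R θ)
    refine this.congr fun Q _ ↦ ?_
    simp [sub_add]
  have husc (Q : V) : UpperSemicontinuous fun θ ↦ H Q - b (Q - R) θ :=
    (continuous_const.sub (hb_right (Q - R))).upperSemicontinuous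
  have hconcave (Q : V) : ConcaveOn ℝ univ fun θ ↦ H Q - b (Q - R) θ :=
    (concaveOn_const (H Q) convex_univ).sub ((b (Q - R)).convexOn convex_univ)
  obtain ⟨Θ, hΘ_fin, hΘ⟩ := exists_finite_forall_exists_lt hS hlsc
    fun Q hQ ↦ exists_lt_sub_apply fun hQR ↦ ht Q hQ (sub_eq_zero.1 (map_sub b Q R ▸ hQR))
  obtain ⟨θ, -, hθ⟩ := Sion.exists_lt_iInf_of_lt_iInf_of_finite hSne hS
    (fun θ _ ↦ hlsc θ) (fun θ _ ↦ (hconvex θ).quasiconvexOn) convex_univ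
    (fun Q _ ↦ (husc Q).upperSemicontinuousOn _) (fun Q _ ↦ (hconcave Q).quasiconcaveOn)
    hH.1 hΘ_fin (subset_univ Θ) hΘ
  exact ⟨θ, hθ⟩

end LagrangeMultiplier

section Bregman

variable {Z ι : Type*} [Fintype Z] [Fintype ι] {β β' : Z → ℝ → ℝ}

/-- The convex function `H(Q) = ∑ z, β_z(Q(z))` generating the Bregman divergence. -/
def bregmanEntropy (β : Z → ℝ → ℝ) (Q : Z → ℝ) : ℝ :=
  ∑ z, β z (Q z)

/-- The Bregman divergence `B(P, Q)`; `β' z` stands for the derivative of `β z`, so only its values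
on `(0, ∞)` are meaningful. -/
def bregmanDiv (β β' : Z → ℝ → ℝ) (P Q : Z → ℝ) : ℝ :=
  ∑ z, (β z (P z) - β z (Q z) - β' z (Q z) * (P z - Q z))

/-- `Q` is a member of the Bregman family with parameter `θ`: a positive probability vector at which
the gradient of the entropy is `⟨θ, f⟩` up to a constant (the number `Λ(θ)`). The statistic `f` is
encoded as the matrix with rows `f z`, so that the mean `μ(Q)` is `Q ᵥ* f`. -/
structure IsBregmanMember (β' : Z → ℝ → ℝ) (f : Matrix Z ι ℝ) (θ : ι → ℝ) (Q : Z → ℝ) :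
    Prop where
  pos : ∀ z, 0 < Q z
  sum_eq_one : ∑ z, Q z = 1
  exists_deriv_eq : ∃ r, ∀ z, β' z (Q z) = θ ⬝ᵥ f z - r

theorem convexOn_bregmanEntropy (hβ : ∀ z, ConvexOn ℝ (Ici 0) (β z)) :
    ConvexOn ℝ (Ici 0) (bregmanEntropy β) := by
  refine ⟨convex_Ici 0, fun P hP Q hQ a b ha hb hab ↦ ?_⟩
  simp only [bregmanEntropy, Finset.smul_sum, ← Finset.sum_add_distrib]
  exact Finset.sum_le_sum fun z _ ↦ (hβ z).2 (hP z) (hQ z) ha hb hab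

theorem continuousOn_bregmanEntropy (hβ : ∀ z, ContinuousOn (β z) (Ici 0)) :
    ContinuousOn (bregmanEntropy β) (Ici 0) :=
  continuousOn_finsetSum _ fun z _ ↦
    (hβ z).comp (continuous_apply z).continuousOn fun _ hQ ↦ hQ z

theorem bregmanDiv_nonneg {P Q : Z → ℝ} (hβ : ∀ z, ConvexOn ℝ (Ici 0) (β z))
    (hβd : ∀ z x, 0 < x → HasDerivAt (β z) (β' z x) x) (hP : ∀ z, 0 ≤ P z) (hQ : ∀ z, 0 < Q z) :
    0 ≤ bregmanDiv β β' P Q := by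
  refine Finset.sum_nonneg fun z _ ↦ ?_
  have := tangent_le_of_convexOn (hβ z) (hQ z).le (hP z) (hβd z _ (hQ z))
  linarith

theorem IsBregmanMember.bregmanDiv_eq {f : Matrix Z ι ℝ} {θ : ι → ℝ} {P Q : Z → ℝ}
    (hQ : IsBregmanMember β' f θ Q) (hP : ∑ z, P z = 1) :
    bregmanDiv β β' P Q =
      bregmanEntropy β P - bregmanEntropy β Q - (P ᵥ* f - Q ᵥ* f) ⬝ᵥ θ := by
  obtain ⟨r, hr⟩ := hQ.exists_deriv_eq
  have hsum : ∑ z, (P z - Q z) = 0 := by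
    rw [Finset.sum_sub_distrib, hP, hQ.sum_eq_one, sub_self]
  have hmean : ∑ z, θ ⬝ᵥ f z * (P z - Q z) = (P ᵥ* f - Q ᵥ* f) ⬝ᵥ θ := by
    rw [← sub_vecMul, ← dotProduct_mulVec]
    exact Finset.sum_congr rfl fun z _ ↦ by rw [mul_comm, dotProduct_comm]; rfl
  calc bregmanDiv β β' P Q
      = ∑ z, (β z (P z) - β z (Q z) - θ ⬝ᵥ f z * (P z - Q z) + r * (P z - Q z)) :=
        Finset.sum_congr rfl fun z _ ↦ by rw [hr]; ring
    _ = bregmanEntropy β P - bregmanEntropy β Q - (P ᵥ* f - Q ᵥ* f) ⬝ᵥ θ := by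
        rw [Finset.sum_add_distrib, ← Finset.mul_sum, hsum, mul_zero, add_zero,
          Finset.sum_sub_distrib, hmean, Finset.sum_sub_distrib]
        rfl

theorem IsBregmanMember.entropy_sub_le_bregmanDiv {f : Matrix Z ι ℝ} {θ : ι → ℝ}
    {P Q R : Z → ℝ} (hβ : ∀ z, ConvexOn ℝ (Ici 0) (β z))
    (hβd : ∀ z x, 0 < x → HasDerivAt (β z) (β' z x) x) (hQ : IsBregmanMember β' f θ Q)
    (hP : ∑ z, P z = 1) (hR : R ∈ stdSimplex ℝ Z) (hRP : R ᵥ* f = P ᵥ* f) :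
    bregmanEntropy β P - bregmanEntropy β R ≤ bregmanDiv β β' P Q := by
  have pythagoras : bregmanDiv β β' P Q - bregmanDiv β β' R Q =
      bregmanEntropy β P - bregmanEntropy β R := by
    rw [hQ.bregmanDiv_eq hP, hQ.bregmanDiv_eq hR.2, hRP]
    ring
  have := bregmanDiv_nonneg hβ hβd hR.1 hQ.pos
  linarith

theorem exists_forall_lt_bregmanEntropy_sub {f : Matrix Z ι ℝ} {P : Z → ℝ} {t : ℝ}
    (hβ : ∀ z, ConvexOn ℝ (Ici 0) (β z)) (hβc : ∀ z, ContinuousOn (β z) (Ici 0))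
    (ht : ∀ Q ∈ stdSimplex ℝ Z, Q ᵥ* f = P ᵥ* f → t < bregmanEntropy β Q) :
    ∃ θ, ∀ Q ∈ stdSimplex ℝ Z, t < bregmanEntropy β Q - (Q ᵥ* f - P ᵥ* f) ⬝ᵥ θ := by
  classical
  let b : (Z → ℝ) →ₗ[ℝ] (ι → ℝ) →ₗ[ℝ] ℝ := toLinearMap₂' ℝ f
  have hb (Q : Z → ℝ) (θ : ι → ℝ) : b Q θ = Q ᵥ* f ⬝ᵥ θ := by
    rw [toLinearMap₂'_apply', dotProduct_mulVec]
  have hsub : stdSimplex ℝ Z ⊆ Ici 0 := fun Q hQ ↦ hQ.1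
  obtain ⟨θ, hθ⟩ := exists_forall_lt_sub_of_forall_fiber_lt (b := b) (R := P)
    (isCompact_stdSimplex ℝ Z)
    ((convexOn_bregmanEntropy hβ).subset hsub (convex_stdSimplex ℝ Z))
    ((continuousOn_bregmanEntropy hβc).mono hsub).lowerSemicontinuousOn
    (fun θ ↦ (b.flip θ).continuous_of_finiteDimensional)
    (fun Q ↦ (b Q).continuous_of_finiteDimensional)
    fun Q hQ hQP ↦ ht Q hQ <| dotProduct_eq _ _ fun θ ↦ by rw [← hb, ← hb, hQP]
  refine ⟨θ, fun Q hQ ↦ ?_⟩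
  simpa only [hb, sub_vecMul] using hθ Q hQ

theorem stmt_7_general {f : Matrix Z ι ℝ} {q : (ι → ℝ) → Z → ℝ} {P R : Z → ℝ}
    (hβc : ∀ z, ContinuousOn (β z) (Ici 0)) (hβ : ∀ z, ConvexOn ℝ (Ioi 0) (β z))
    (hβd : ∀ z x, 0 < x → HasDerivAt (β z) (β' z x) x)
    (hq : ∀ θ, IsBregmanMember β' f θ (q θ)) (hP : P ∈ stdSimplex ℝ Z)
    (hR : R ∈ stdSimplex ℝ Z) (hRP : R ᵥ* f = P ᵥ* f)
    (hmin : ∀ Q ∈ stdSimplex ℝ Z, Q ᵥ* f = P ᵥ* f → bregmanEntropy β R ≤ bregmanEntropy β Q) :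
    ⨅ θ, bregmanDiv β β' P (q θ) = bregmanEntropy β P - bregmanEntropy β R := by
  have hβ_Ici (z : Z) : ConvexOn ℝ (Ici 0) (β z) :=
    closure_Ioi (0 : ℝ) ▸ convexOn_closure_of_continuousOn (hβ z) (by simpa using hβc z)
  refine ciInf_eq_of_forall_ge_of_forall_gt_exists_lt
    (fun θ ↦ (hq θ).entropy_sub_le_bregmanDiv hβ_Ici hβd hP.2 hR hRP) fun w hw ↦ ?_
  obtain ⟨θ, hθ⟩ := exists_forall_lt_bregmanEntropy_sub hβ_Ici hβc
    fun Q hQ hQP ↦ (sub_lt_comm.1 hw).trans_le (hmin Q hQ hQP)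
  have hθq := hθ (q θ) ⟨fun z ↦ ((hq θ).pos z).le, (hq θ).sum_eq_one⟩
  refine ⟨θ, ?_⟩
  rw [(hq θ).bregmanDiv_eq hP.2, ← neg_sub (q θ ᵥ* f), neg_dotProduct]
  linarith

end Bregman

theorem stmt_7 {Z : Type} [Fintype Z] [Nonempty Z] {d : ℕ}
    (β β' : Z → ℝ → ℝ)
    (hβc : ∀ z, ContinuousOn (β z) (Set.Ici 0))
    (hβsc : ∀ z, StrictConvexOn ℝ (Set.Ioi 0) (β z))
    (hβd : ∀ z x, 0 < x → HasDerivAt (β z) (β' z x) x)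
    (hβ'bot : ∀ z, Filter.Tendsto (β' z) (nhdsWithin 0 (Set.Ioi 0)) Filter.atBot)
    (hβ'top : ∀ z, Filter.Tendsto (β' z) Filter.atTop Filter.atTop)
    (e : Z → ℝ → ℝ)
    (he_pos : ∀ z r, 0 < e z r)
    (he_left : ∀ z r, β' z (e z r) = r)
    (he_right : ∀ z x, 0 < x → e z (β' z x) = x)
    (f : Z → Fin d → ℝ)
    (prob : Set (Z → ℝ))
    (hprob : prob = {P : Z → ℝ | (∀ z, 0 ≤ P z) ∧ (∑ z, P z) = 1})
    (μ : (Z → ℝ) → Fin d → ℝ)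
    (hμ : ∀ P i, μ P i = ∑ z, P z * f z i)
    (H : (Z → ℝ) → ℝ)
    (hH : ∀ Q, H Q = ∑ z, β z (Q z))
    (Λ : (Fin d → ℝ) → ℝ)
    (hΛ : ∀ θ, (∑ z, e z ((∑ i, θ i * f z i) - Λ θ)) = 1)
    (Pθ : (Fin d → ℝ) → Z → ℝ)
    (hPθ : ∀ θ z, Pθ θ z = e z ((∑ i, θ i * f z i) - Λ θ))
    (Bdiv : (Z → ℝ) → (Z → ℝ) → ℝ)
    (hBdiv : ∀ P Q, Bdiv P Q = ∑ z, (β z (P z) - β z (Q z) - β' z (Q z) * (P z - Q z)))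
    (BE : (Z → ℝ) → ℝ)
    (hBE : ∀ P, BE P = ⨅ θ, Bdiv P (Pθ θ))
    (Pr : (Z → ℝ) → Z → ℝ)
    (hPr : ∀ P ∈ prob, Pr P ∈ prob ∧ μ (Pr P) = μ P ∧
      (∀ Q ∈ prob, μ Q = μ P → H (Pr P) ≤ H Q) ∧
      (∀ Q ∈ prob, μ Q = μ P → H Q = H (Pr P) → Q = Pr P)) :
    ∀ P ∈ prob, BE P = H P - H (Pr P) := by
  intro P hP
  subst hprob
  obtain ⟨hR, hRP, hmin, -⟩ := hPr P hP
  obtain rfl : μ = fun P ↦ P ᵥ* f := funext₂ hμ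
  have hmember (θ : Fin d → ℝ) : IsBregmanMember β' f θ (Pθ θ) := by
    rw [funext (hPθ θ)]
    exact ⟨fun z ↦ he_pos z _, hΛ θ, Λ θ, fun z ↦ he_left z _⟩
  simp only [hH] at hmin
  simp only [hBE, hBdiv, hH]
  exact stmt_7_general hβc (fun z ↦ (hβsc z).convexOn) hβd hmember hP hR hRP hmin
end

section
/- The moment map μ : 𝒫(Z) → ℝ^d, P ↦ Σ_{z∈Z} P(z) f(z), maps 𝒫(Z) onto the convex polytope conv{f(z) : z ∈ Z}, and its restriction to cl(ℰ) is a homeomorphism from cl(ℰ) onto conv{f(z) : z ∈ Z}. -/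
/-!
Let `B P = ∑ z, β z (P z)`. A positive probability vector belongs to the Bregman family exactly when
the derivative of `B` at it vanishes in all directions preserving total mass and moment.

* Surjectivity: `B` has a minimizer on each moment fibre of the simplex. If the fibre contains a
  positive point, then `β' z (0+) = -∞` forces the minimizer to be positive, hence to be critical.
  Positive points are dense in the simplex, and the closure of the family is compact.
* Injectivity: let `P` be in the closure of the family and `Q` in the same fibre. The derivative of
  `B` in the direction `Q - P` vanishes along the family; in the limit `P`, coordinates with
  `P z = 0 < Q z` would send it to `-∞`, so `supp Q ⊆ supp P` and the derivative vanishes at `P`. By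
  symmetry the same holds with `P` and `Q` exchanged, and strict monotonicity of the `β' z` gives
  `P = Q`.
-/

open Set Filter Topology

section OneVariable

variable {φ φ' : ℝ → ℝ}

theorem strictMonoOn_of_strictConvexOn_of_hasDerivAt {S : Set ℝ} (hφ : StrictConvexOn ℝ S φ)
    (hφ' : ∀ x ∈ S, HasDerivAt φ (φ' x) x) : StrictMonoOn φ' S :=
  (hφ.strictMonoOn_deriv fun x hx => (hφ' x hx).differentiableAt).congr
    fun x hx => (hφ' x hx).deriv

theorem continuousOn_of_strictConvexOn_of_hasDerivAt {S : Set ℝ} (hS : IsOpen S)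
    (hφ : StrictConvexOn ℝ S φ) (hφ' : ∀ x ∈ S, HasDerivAt φ (φ' x) x) : ContinuousOn φ' S := by
  have hmono := strictMonoOn_of_strictConvexOn_of_hasDerivAt hφ hφ'
  have hdarboux : OrdConnected (φ' '' S) :=
    hφ.1.ordConnected.image_hasDerivWithinAt fun x hx => (hφ' x hx).hasDerivWithinAt
  intro x hx
  have hxS : S ∈ 𝓝 x := hS.mem_nhds hx
  obtain ⟨a, hax, haS⟩ := exists_Ioc_subset_of_mem_nhds hxS (exists_lt x)
  obtain ⟨b, hxb, hbS⟩ := exists_Ico_subset_of_mem_nhds hxS (exists_gt x)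
  obtain ⟨a', haa', ha'x⟩ := exists_between hax
  obtain ⟨b', hxb', hb'b⟩ := exists_between hxb
  have ha'S : a' ∈ S := haS ⟨haa', ha'x.le⟩
  have hb'S : b' ∈ S := hbS ⟨hxb'.le, hb'b⟩
  refine (hmono.continuousAt_of_image_mem_nhds hxS ?_).continuousWithinAt
  exact mem_of_superset (Icc_mem_nhds (hmono ha'S hx ha'x) (hmono hx hb'S hxb'))
    (hdarboux.out (mem_image_of_mem φ' ha'S) (mem_image_of_mem φ' hb'S))

theorem exists_lt_of_tendsto_deriv_atBot {a b : ℝ} (hab : a < b)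
    (hcont : ContinuousOn φ (Icc a b)) (hderiv : ∀ t ∈ Ioo a b, HasDerivAt φ (φ' t) t)
    (hbot : Tendsto φ' (𝓝[>] a) atBot) : ∃ t ∈ Ioc a b, φ t < φ a := by
  obtain ⟨c, hac, hneg⟩ := mem_nhdsGT_iff_exists_Ioo_subset.1 (hbot.eventually_lt_atBot 0)
  have hat : a < min b c := lt_min hab hac
  have hanti : StrictAntiOn φ (Icc a (min b c)) := by
    refine strictAntiOn_of_hasDerivWithinAt_neg (f' := φ') (convex_Icc _ _)
      (hcont.mono (Icc_subset_Icc_right (min_le_left b c))) ?_ ?_ <;> rw [interior_Icc]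
    · exact fun t ht => (hderiv t (Ioo_subset_Ioo_right (min_le_left b c) ht)).hasDerivWithinAt
    · exact fun t ht => hneg (Ioo_subset_Ioo_right (min_le_right b c) ht)
  exact ⟨min b c, ⟨hat, min_le_left b c⟩,
    hanti (left_mem_Icc.2 hat.le) (right_mem_Icc.2 hat.le) hat⟩

end OneVariable

theorem tendsto_sum_atBot_of_isBoundedUnder {ι α : Type*} [Fintype ι] {l : Filter α}
    {g : ι → α → ℝ} {i : ι} (hi : Tendsto (g i) l atBot)
    (hbdd : ∀ j, l.IsBoundedUnder (· ≤ ·) (g j)) : Tendsto (fun a => ∑ j, g j a) l atBot := by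
  classical
  choose C hC using fun j => (hbdd j).eventually_le
  simp_rw [← fun a => Finset.add_sum_erase Finset.univ (g · a) (Finset.mem_univ i)]
  refine tendsto_atBot_add_right_of_ge' l (∑ j ∈ Finset.univ.erase i, C j) hi ?_
  filter_upwards [eventually_all.2 hC] with a ha using Finset.sum_le_sum fun j _ => ha j

theorem exists_homeomorph_of_bijOn {X Y : Type*} [TopologicalSpace X] [TopologicalSpace Y]
    [T2Space Y] {F : X → Y} {s : Set X} {t : Set Y} (hs : IsCompact s) (hF : ContinuousOn F s)
    (hbij : BijOn F s t) : ∃ h : s ≃ₜ t, ∀ x, (h x : Y) = F x := by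
  have := isCompact_iff_compactSpace.1 hs
  have hcont : Continuous (hbij.equiv F) := hF.domRestrict.subtype_mk _
  exact ⟨hcont.homeoOfEquivCompactToT2, fun _ => rfl⟩

section Coordinates

variable {ι : Type*} {g : ℝ → ℝ} {P Q : ι → ℝ} {i : ι}

theorem tendsto_const_mul_eval_of_pos (hg : ContinuousOn g (Ioi 0)) (hi : 0 < P i) (c : ℝ) :
    Tendsto (fun R : ι → ℝ => c * g (R i)) (𝓝 P) (𝓝 (c * g (P i))) :=
  ((hg.continuousAt (Ioi_mem_nhds hi)).tendsto.comp ((continuous_apply i).tendsto P)).const_mul c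

theorem tendsto_const_mul_eval_atBot (hg : Tendsto g (𝓝[>] 0) atBot) (hi : P i = 0) {c : ℝ}
    (hc : 0 < c) :
    Tendsto (fun R : ι → ℝ => c * g (R i)) (𝓝[{R | ∀ j, 0 < R j}] P) atBot := by
  refine (hg.comp ?_).const_mul_atBot hc
  refine tendsto_nhdsWithin_iff.2 ⟨?_, eventually_mem_nhdsWithin.mono fun R hR => hR i⟩
  exact hi ▸ ((continuous_apply i).tendsto P).mono_left nhdsWithin_le_nhds

theorem add_smul_sub_pos (hP : 0 ≤ P) (hQ : ∀ i, 0 < Q i) {t : ℝ} (ht : t ∈ Ioc 0 1) (i : ι) :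
    0 < (P + t • (Q - P)) i :=
  calc
    0 < (1 - t) * P i + t * Q i :=
      add_pos_of_nonneg_of_pos (mul_nonneg (sub_nonneg.2 ht.2) (hP i)) (mul_pos ht.1 (hQ i))
    _ = P i + t * (Q i - P i) := by ring

theorem tendsto_add_smul_sub_nhdsWithin_pos (hP : 0 ≤ P) (hQ : ∀ i, 0 < Q i) :
    Tendsto (fun t : ℝ => P + t • (Q - P)) (𝓝[>] 0) (𝓝[{R | ∀ i, 0 < R i}] P) := by
  have hline : Continuous fun t : ℝ => P + t • (Q - P) := by fun_prop
  refine tendsto_nhdsWithin_iff.2 ⟨?_, ?_⟩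
  · simpa using (hline.tendsto 0).mono_left nhdsWithin_le_nhds
  · filter_upwards [Ioc_mem_nhdsGT zero_lt_one] with t ht using add_smul_sub_pos hP hQ ht

end Coordinates

theorem stdSimplex_subset_closure_pos {Z : Type*} [Fintype Z] :
    stdSimplex ℝ Z ⊆ closure {P ∈ stdSimplex ℝ Z | ∀ z, 0 < P z} := by
  intro P hP
  have : Nonempty Z := by
    by_contra hZ
    rw [not_nonempty_iff] at hZ
    simp [stdSimplex_of_isEmpty_index] at hP
  let U : stdSimplex ℝ Z := stdSimplex.barycenter
  have hU (z : Z) : 0 < U.1 z := by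
    rw [stdSimplex.barycenter_apply]
    positivity
  have hseg : openSegment ℝ P U ⊆ {P ∈ stdSimplex ℝ Z | ∀ z, 0 < P z} := by
    intro R hR
    refine ⟨(convex_stdSimplex ℝ Z).openSegment_subset hP U.2 hR, fun z => ?_⟩
    obtain ⟨a, b, ha, hb, -, rfl⟩ := hR
    exact add_pos_of_nonneg_of_pos (mul_nonneg ha.le (hP.1 z)) (mul_pos hb (hU z))
  exact closure_mono hseg (segment_subset_closure_openSegment (left_mem_segment ℝ P U))

section Entropy

variable {Z : Type*} [Fintype Z] {β β' : Z → ℝ → ℝ} {P Q u : Z → ℝ} {S : Set (Z → ℝ)}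

/-- The separable convex function `P ↦ ∑ z, β z (P z)` that generates the Bregman family. -/
def entropy (β : Z → ℝ → ℝ) (P : Z → ℝ) : ℝ := ∑ z, β z (P z)

/-- The derivative `u ↦ ∑ z, u z * β' z (P z)` of `entropy β` at a positive vector `P`, where `β' z`
stands for the derivative of `β z`. It is defined for every `P`; where `P z = 0` the value
`β' z (P z)` is meaningless, and only directions `u` with `u z = 0` are then considered. -/
def entropyDeriv (β' : Z → ℝ → ℝ) (P : Z → ℝ) : Module.Dual ℝ (Z → ℝ) :=
  Fintype.linearCombination ℝ fun z => β' z (P z)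

theorem entropyDeriv_apply (β' : Z → ℝ → ℝ) (P u : Z → ℝ) :
    entropyDeriv β' P u = ∑ z, u z * β' z (P z) := rfl

theorem continuousOn_entropy (hβ : ∀ z, ContinuousOn (β z) (Ici 0)) :
    ContinuousOn (entropy β) (Ici 0) :=
  continuousOn_finsetSum _ fun z _ =>
    (hβ z).comp (continuous_apply z).continuousOn fun _ hP => hP z

theorem hasDerivAt_entropy_line (hβ : ∀ z x, 0 < x → HasDerivAt (β z) (β' z x) x) {t : ℝ}
    (hpos : ∀ z, 0 < (P + t • u) z) :
    HasDerivAt (fun s : ℝ => entropy β (P + s • u)) (entropyDeriv β' (P + t • u) u) t := by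
  refine HasDerivAt.fun_sum fun z _ => ?_
  have hline : HasDerivAt (fun s : ℝ => P z + s * u z) (u z) t := by
    simpa using ((hasDerivAt_id t).mul_const (u z)).const_add (P z)
  rw [smul_eq_mul, mul_comm]
  exact (hβ z _ (hpos z)).comp t hline

theorem entropyDeriv_eq_zero_of_isMinOn (hβ : ∀ z x, 0 < x → HasDerivAt (β z) (β' z x) x)
    {K : Set (Z → ℝ)} (hmin : IsMinOn (entropy β) K P) (hpos : ∀ z, 0 < P z)
    (hu : ∀ᶠ t : ℝ in 𝓝 0, P + t • u ∈ K) : entropyDeriv β' P u = 0 := by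
  have hderiv := hasDerivAt_entropy_line (u := u) hβ (t := 0) (by simpa using hpos)
  rw [zero_smul, add_zero] at hderiv
  refine IsLocalMin.hasDerivAt_eq_zero ?_ hderiv
  filter_upwards [hu] with t ht
  simpa using hmin ht

theorem eq_of_entropyDeriv_sub_eq (hβ' : ∀ z, StrictMonoOn (β' z) (Ioi 0)) (hP : 0 ≤ P)
    (hQ : 0 ≤ Q) (hsupp : ∀ z, P z = 0 ↔ Q z = 0)
    (h : entropyDeriv β' P (P - Q) = entropyDeriv β' Q (P - Q)) : P = Q := by
  have hterm_pos (z : Z) (hz : P z ≠ Q z) : 0 < (P z - Q z) * (β' z (P z) - β' z (Q z)) := by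
    have hPz : 0 < P z := (hP z).lt_of_ne' fun h0 => hz (h0.trans ((hsupp z).1 h0).symm)
    have hQz : 0 < Q z := (hQ z).lt_of_ne' fun h0 => hz (((hsupp z).2 h0).trans h0.symm)
    rcases hz.lt_or_gt with hlt | hgt
    · exact mul_pos_of_neg_of_neg (sub_neg.2 hlt) (sub_neg.2 (hβ' z hPz hQz hlt))
    · exact mul_pos (sub_pos.2 hgt) (sub_pos.2 (hβ' z hQz hPz hgt))
  have hterm_nonneg (z : Z) : 0 ≤ (P z - Q z) * (β' z (P z) - β' z (Q z)) := by
    by_cases hz : P z = Q z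
    · simp [hz]
    · exact (hterm_pos z hz).le
  have hsum : ∑ z, (P z - Q z) * (β' z (P z) - β' z (Q z)) = 0 := by
    simpa only [entropyDeriv_apply, Pi.sub_apply, mul_sub, Finset.sum_sub_distrib]
      using sub_eq_zero.2 h
  ext z
  by_contra hz
  exact (hterm_pos z hz).ne'
    ((Finset.sum_eq_zero_iff_of_nonneg fun z _ => hterm_nonneg z).1 hsum z (Finset.mem_univ z))

theorem tendsto_entropyDeriv (hcont : ∀ z, ContinuousOn (β' z) (Ioi 0)) (hP : 0 ≤ P)
    (hu : ∀ z, P z = 0 → u z = 0) :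
    Tendsto (fun R => entropyDeriv β' R u) (𝓝 P) (𝓝 (entropyDeriv β' P u)) := by
  refine tendsto_finsetSum _ fun z _ => ?_
  rcases (hP z).eq_or_lt' with hz | hz
  · simpa only [hu z hz, zero_smul] using tendsto_const_nhds
  · exact tendsto_const_mul_eval_of_pos (hcont z) hz (u z)

theorem tendsto_entropyDeriv_atBot (hcont : ∀ z, ContinuousOn (β' z) (Ioi 0))
    (hbot : ∀ z, Tendsto (β' z) (𝓝[>] 0) atBot) (hP : 0 ≤ P) (hu : ∀ z, P z = 0 → 0 ≤ u z)
    {z₀ : Z} (hz₀ : P z₀ = 0) (hu₀ : 0 < u z₀) :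
    Tendsto (fun R => entropyDeriv β' R u) (𝓝[{R | ∀ z, 0 < R z}] P) atBot := by
  refine tendsto_sum_atBot_of_isBoundedUnder (tendsto_const_mul_eval_atBot (hbot z₀) hz₀ hu₀)
    fun z => ?_
  rcases (hP z).eq_or_lt' with hz | hz
  · rcases (hu z hz).eq_or_lt' with huz | huz
    · simpa only [huz, zero_smul] using isBoundedUnder_const
    · exact (tendsto_const_mul_eval_atBot (hbot z) hz huz).isBoundedUnder_le_atBot
  · exact (tendsto_const_mul_eval_of_pos (hcont z) hz (u z)).isBoundedUnder_le.mono
      nhdsWithin_le_nhds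

theorem pos_of_isMinOn_entropy (hβ : ∀ z, ContinuousOn (β z) (Ici 0))
    (hderiv : ∀ z x, 0 < x → HasDerivAt (β z) (β' z x) x)
    (hcont : ∀ z, ContinuousOn (β' z) (Ioi 0)) (hbot : ∀ z, Tendsto (β' z) (𝓝[>] 0) atBot)
    {K : Set (Z → ℝ)} (hK : Convex ℝ K) (hK₀ : K ⊆ Ici 0) (hP : P ∈ K)
    (hmin : IsMinOn (entropy β) K P) (hQ : Q ∈ K) (hQpos : ∀ z, 0 < Q z) (z : Z) : 0 < P z := by
  by_contra hz
  have hz : P z = 0 := le_antisymm (not_lt.1 hz) (hK₀ hP z)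
  have hline_mem (t : ℝ) (ht : t ∈ Icc 0 1) : P + t • (Q - P) ∈ K := hK.add_smul_sub_mem hP hQ ht
  have hslope := (tendsto_entropyDeriv_atBot (u := Q - P) hcont hbot (hK₀ hP)
    (fun y hy => by simpa [hy] using (hQpos y).le) hz (by simpa [hz] using hQpos z)).comp
      (tendsto_add_smul_sub_nhdsWithin_pos (hK₀ hP) hQpos)
  obtain ⟨t, ht, hlt⟩ := exists_lt_of_tendsto_deriv_atBot (zero_lt_one' ℝ)
    ((continuousOn_entropy hβ).comp (by fun_prop) fun t ht => hK₀ (hline_mem t ht))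
    (fun t ht => hasDerivAt_entropy_line hderiv
      (add_smul_sub_pos (hK₀ hP) hQpos (Ioo_subset_Ioc_self ht))) hslope
  refine hlt.not_ge ?_
  simpa using hmin (hline_mem t (Ioc_subset_Icc_self ht))

theorem eq_zero_of_mem_closure_of_entropyDeriv_eq_zero
    (hcont : ∀ z, ContinuousOn (β' z) (Ioi 0)) (hbot : ∀ z, Tendsto (β' z) (𝓝[>] 0) atBot)
    (hS : ∀ R ∈ S, ∀ z, 0 < R z) (hSu : ∀ R ∈ S, entropyDeriv β' R u = 0) (hP : P ∈ closure S)
    (hu : ∀ z, P z = 0 → 0 ≤ u z) {z : Z} (hz : P z = 0) : u z = 0 := by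
  by_contra huz
  have hP₀ : 0 ≤ P := closure_minimal (fun R hR z => (hS R hR z).le) isClosed_Ici hP
  have : (𝓝[S] P).NeBot := mem_closure_iff_nhdsWithin_neBot.1 hP
  have hlim := (tendsto_entropyDeriv_atBot hcont hbot hP₀ hu hz ((hu z hz).lt_of_ne' huz)).mono_left
    (nhdsWithin_mono P hS)
  obtain ⟨R, hneg, hR⟩ := ((hlim.eventually_lt_atBot 0).and eventually_mem_nhdsWithin).exists
  exact hneg.ne (hSu R hR)

theorem entropyDeriv_eq_zero_of_mem_closure (hcont : ∀ z, ContinuousOn (β' z) (Ioi 0))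
    (hSu : ∀ R ∈ S, entropyDeriv β' R u = 0) (hP : P ∈ closure S) (hP₀ : 0 ≤ P)
    (hu : ∀ z, P z = 0 → u z = 0) : entropyDeriv β' P u = 0 := by
  have : (𝓝[S] P).NeBot := mem_closure_iff_nhdsWithin_neBot.1 hP
  have hlim := (tendsto_entropyDeriv hcont hP₀ hu).mono_left (nhdsWithin_le_nhds (s := S))
  refine tendsto_nhds_unique hlim (tendsto_const_nhds.congr' ?_)
  filter_upwards [eventually_mem_nhdsWithin] with R hR using (hSu R hR).symm

end Entropy

section BregmanFamily

variable {Z : Type*} [Fintype Z] {V : Type*} [AddCommGroup V] [Module ℝ V]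
  {β β' : Z → ℝ → ℝ} {f : Z → V} {P Q : Z → ℝ}

/-- The moment map `P ↦ ∑ z, P z • f z`, as a linear map on all of `ℝ^Z`. -/
abbrev momentMap (f : Z → V) : (Z → ℝ) →ₗ[ℝ] V := Fintype.linearCombination ℝ f

/-- The Bregman family: positive probability vectors `P` with `β' z (P z) = θ (f z) - r` for some
linear functional `θ` and some normalizing constant `r`. When the `β' z` are bijections
from `(0, ∞)` onto `ℝ` with inverses `e z`, these are the vectors `P_θ z = e z (θ (f z) - Λ θ)`. -/
def bregmanFamily (β' : Z → ℝ → ℝ) (f : Z → V) : Set (Z → ℝ) :=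
  {P ∈ stdSimplex ℝ Z | (∀ z, 0 < P z) ∧
    ∃ (θ : Module.Dual ℝ V) (r : ℝ), ∀ z, β' z (P z) = θ (f z) - r}

theorem image_momentMap_stdSimplex (f : Z → V) :
    momentMap f '' stdSimplex ℝ Z = convexHull ℝ (range f) := by
  classical
  rw [← convexHull_rangle_single_eq_stdSimplex, LinearMap.image_convexHull, ← range_comp]
  congr 2
  ext z
  simp

theorem exists_dual_apply_eq_of_ker_momentMap_le {g : Z → ℝ}
    (h : LinearMap.ker (momentMap f) ≤ LinearMap.ker (momentMap g)) :
    ∃ θ : Module.Dual ℝ V, ∀ z, g z = θ (f z) := by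
  classical
  have hg : momentMap g ∈ (LinearMap.ker (momentMap f)).dualAnnihilator :=
    (Submodule.mem_dualAnnihilator _).2 fun u hu => h hu
  rw [← LinearMap.range_dualMap_eq_dualAnnihilator_ker] at hg
  obtain ⟨θ, hθ⟩ := hg
  refine ⟨θ, fun z => ?_⟩
  simpa using (LinearMap.congr_fun hθ (Pi.single z 1)).symm

theorem entropyDeriv_eq_zero_of_mem_bregmanFamily (hP : P ∈ bregmanFamily β' f) {u : Z → ℝ}
    (hsum : ∑ z, u z = 0) (hmoment : momentMap f u = 0) : entropyDeriv β' P u = 0 := by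
  obtain ⟨-, -, θ, r, hθ⟩ := hP
  calc entropyDeriv β' P u = θ (momentMap f u) - (∑ z, u z) * r := by
        simp [entropyDeriv_apply, hθ, Fintype.linearCombination_apply, mul_sub, Finset.sum_mul]
    _ = 0 := by simp [hsum, hmoment]

theorem mem_bregmanFamily_of_entropyDeriv_eq_zero (hP : P ∈ stdSimplex ℝ Z)
    (hpos : ∀ z, 0 < P z)
    (hcrit : ∀ u : Z → ℝ, ∑ z, u z = 0 → momentMap f u = 0 → entropyDeriv β' P u = 0) :
    P ∈ bregmanFamily β' f := by
  -- Multipliers for mass and moment together form a functional on `ℝ × V`.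
  obtain ⟨θ, hθ⟩ := exists_dual_apply_eq_of_ker_momentMap_le
    (f := fun z => ((1 : ℝ), f z)) (g := fun z => β' z (P z)) fun u hu => by
      have hu' := LinearMap.mem_ker.1 hu
      simp only [Fintype.linearCombination_apply, Prod.ext_iff, Prod.fst_sum, Prod.snd_sum] at hu'
      exact hcrit u (by simpa using hu'.1) (by simpa [Fintype.linearCombination_apply] using hu'.2)
  refine ⟨hP, hpos, θ.comp (LinearMap.inr ℝ ℝ V), -θ (1, 0), fun z => ?_⟩
  rw [hθ, sub_neg_eq_add, LinearMap.comp_apply, LinearMap.inr_apply, ← map_add]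
  simp

theorem range_eq_bregmanFamily (hβ' : ∀ z, StrictMonoOn (β' z) (Ioi 0)) {Θ : Type*}
    {L : Θ → Module.Dual ℝ V} (hL : Function.Surjective L) {p : Θ → Z → ℝ}
    (hpos : ∀ θ z, 0 < p θ z) (hsum : ∀ θ, ∑ z, p θ z = 1) {Λ : Θ → ℝ}
    (hp : ∀ θ z, β' z (p θ z) = L θ (f z) - Λ θ) : range p = bregmanFamily β' f := by
  refine Subset.antisymm ?_ ?_
  · rintro _ ⟨θ, rfl⟩
    exact ⟨⟨fun z => (hpos θ z).le, hsum θ⟩, hpos θ, L θ, Λ θ, hp θ⟩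
  · rintro P ⟨hP, hPpos, ℓ, r, hPr⟩
    obtain ⟨θ, rfl⟩ := hL ℓ
    refine ⟨θ, eq_of_entropyDeriv_sub_eq hβ' (fun z => (hpos θ z).le) hP.1
      (fun z => iff_of_false (hpos θ z).ne' (hPpos z).ne') ?_⟩
    -- The two derivatives differ by the constant `r - Λ θ`, and `p θ - P` has total mass `0`.
    have hmass : ∑ z, (p θ z - P z) = 0 := by rw [Finset.sum_sub_distrib, hsum, hP.2, sub_self]
    simp only [entropyDeriv_apply, hp, hPr, Pi.sub_apply, mul_sub, Finset.sum_sub_distrib,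
      ← Finset.sum_mul]
    simp only [← Finset.sum_sub_distrib, hmass, zero_mul]

theorem isCompact_closure_bregmanFamily : IsCompact (closure (bregmanFamily β' f)) :=
  (isCompact_stdSimplex ℝ Z).closure_of_subset (sep_subset _ _)

theorem closure_bregmanFamily_subset_stdSimplex :
    closure (bregmanFamily β' f) ⊆ stdSimplex ℝ Z :=
  closure_minimal (sep_subset _ _) (isClosed_stdSimplex ℝ Z)

theorem momentMap_injOn_closure_bregmanFamily (hβ' : ∀ z, StrictMonoOn (β' z) (Ioi 0))
    (hcont : ∀ z, ContinuousOn (β' z) (Ioi 0)) (hbot : ∀ z, Tendsto (β' z) (𝓝[>] 0) atBot) :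
    InjOn (momentMap f) (closure (bregmanFamily β' f)) := by
  have hsimplex := closure_bregmanFamily_subset_stdSimplex (β' := β') (f := f)
  have hcrit {P Q : Z → ℝ} (hP : P ∈ stdSimplex ℝ Z) (hQ : Q ∈ stdSimplex ℝ Z)
      (h : momentMap f P = momentMap f Q) :
      ∀ R ∈ bregmanFamily β' f, entropyDeriv β' R (P - Q) = 0 := fun R hR =>
    entropyDeriv_eq_zero_of_mem_bregmanFamily hR (by simp [hP.2, hQ.2])
      (by rw [map_sub, h, sub_self])
  have hsupp {P Q : Z → ℝ} (hP : P ∈ closure (bregmanFamily β' f))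
      (hQ : Q ∈ closure (bregmanFamily β' f)) (h : momentMap f P = momentMap f Q) (z : Z)
      (hz : P z = 0) : Q z = 0 := by
    have hQP : (Q - P) z = 0 :=
      eq_zero_of_mem_closure_of_entropyDeriv_eq_zero hcont hbot (fun R hR => hR.2.1)
        (hcrit (hsimplex hQ) (hsimplex hP) h.symm) hP
        (fun y hy => by simpa [hy] using (hsimplex hQ).1 y) hz
    simpa [hz] using hQP
  intro P hP Q hQ h
  have hPQ (z : Z) : P z = 0 ↔ Q z = 0 := ⟨hsupp hP hQ h z, hsupp hQ hP h.symm z⟩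
  have hsub := hcrit (hsimplex hP) (hsimplex hQ) h
  refine eq_of_entropyDeriv_sub_eq hβ' (hsimplex hP).1 (hsimplex hQ).1 hPQ ?_
  rw [entropyDeriv_eq_zero_of_mem_closure hcont hsub hP (hsimplex hP).1
      fun z hz => by simp [hz, (hPQ z).1 hz],
    entropyDeriv_eq_zero_of_mem_closure hcont hsub hQ (hsimplex hQ).1
      fun z hz => by simp [hz, (hPQ z).2 hz]]

theorem isClosed_momentMap_fiber (f : Z → V) (Q : Z → ℝ) :
    IsClosed (momentMap f ⁻¹' {momentMap f Q}) := by
  have hker : IsClosed (LinearMap.ker (momentMap f) : Set (Z → ℝ)) :=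
    Submodule.closed_of_finiteDimensional _
  convert! hker.preimage (continuous_sub_right Q) using 1
  ext P
  simp [sub_eq_zero]

theorem exists_mem_bregmanFamily_momentMap_eq (hβ : ∀ z, ContinuousOn (β z) (Ici 0))
    (hderiv : ∀ z x, 0 < x → HasDerivAt (β z) (β' z x) x)
    (hcont : ∀ z, ContinuousOn (β' z) (Ioi 0)) (hbot : ∀ z, Tendsto (β' z) (𝓝[>] 0) atBot)
    (f : Z → V) (hQ : Q ∈ stdSimplex ℝ Z) (hQpos : ∀ z, 0 < Q z) :
    ∃ P ∈ bregmanFamily β' f, momentMap f P = momentMap f Q := by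
  let K : Set (Z → ℝ) := stdSimplex ℝ Z ∩ momentMap f ⁻¹' {momentMap f Q}
  have hKcompact : IsCompact K :=
    (isCompact_stdSimplex ℝ Z).inter_right (isClosed_momentMap_fiber f Q)
  have hKconvex : Convex ℝ K :=
    (convex_stdSimplex ℝ Z).inter ((convex_singleton _).linear_preimage (momentMap f))
  have hK₀ : K ⊆ Ici 0 := fun P hP => hP.1.1
  have hQK : Q ∈ K := ⟨hQ, rfl⟩
  obtain ⟨P, hPK, hmin⟩ :=
    hKcompact.exists_isMinOn ⟨Q, hQK⟩ ((continuousOn_entropy hβ).mono hK₀)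
  have hPpos := pos_of_isMinOn_entropy hβ hderiv hcont hbot hKconvex hK₀ hPK hmin hQK hQpos
  refine ⟨P, mem_bregmanFamily_of_entropyDeriv_eq_zero hPK.1 hPpos fun u hsum hmoment => ?_, hPK.2⟩
  refine entropyDeriv_eq_zero_of_isMinOn hderiv hmin hPpos ?_
  have hline_pos : ∀ᶠ t : ℝ in 𝓝 0, ∀ z, 0 < (P + t • u) z := by
    refine eventually_all.2 fun z => ?_
    have hline : ContinuousAt (fun t : ℝ => (P + t • u) z) 0 := by fun_prop
    exact hline.eventually (lt_mem_nhds (by simpa using hPpos z))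
  filter_upwards [hline_pos] with t ht
  refine ⟨⟨fun z => (ht z).le, ?_⟩, ?_⟩
  · simp [Finset.sum_add_distrib, ← Finset.mul_sum, hsum, hPK.1.2]
  · simpa [hmoment] using hPK.2

variable [TopologicalSpace V] [IsTopologicalAddGroup V] [ContinuousSMul ℝ V]

theorem continuous_momentMap (f : Z → V) : Continuous (momentMap f) :=
  LinearMap.continuous_on_pi _

variable [T2Space V]

theorem bijOn_momentMap_closure_bregmanFamily (hβ : ∀ z, ContinuousOn (β z) (Ici 0))
    (hconvex : ∀ z, StrictConvexOn ℝ (Ioi 0) (β z))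
    (hderiv : ∀ z x, 0 < x → HasDerivAt (β z) (β' z x) x)
    (hbot : ∀ z, Tendsto (β' z) (𝓝[>] 0) atBot) (f : Z → V) :
    BijOn (momentMap f) (closure (bregmanFamily β' f)) (convexHull ℝ (range f)) := by
  have hmono (z : Z) := strictMonoOn_of_strictConvexOn_of_hasDerivAt (hconvex z) (hderiv z)
  have hcont (z : Z) :=
    continuousOn_of_strictConvexOn_of_hasDerivAt isOpen_Ioi (hconvex z) (hderiv z)
  have hμ := continuous_momentMap f
  rw [← image_momentMap_stdSimplex]
  refine ⟨(mapsTo_image _ _).mono_left closure_bregmanFamily_subset_stdSimplex,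
    momentMap_injOn_closure_bregmanFamily hmono hcont hbot, ?_⟩
  calc momentMap f '' stdSimplex ℝ Z
      ⊆ momentMap f '' closure {Q ∈ stdSimplex ℝ Z | ∀ z, 0 < Q z} :=
        image_mono stdSimplex_subset_closure_pos
    _ ⊆ closure (momentMap f '' {Q ∈ stdSimplex ℝ Z | ∀ z, 0 < Q z}) :=
        image_closure_subset_closure_image hμ
    _ ⊆ momentMap f '' closure (bregmanFamily β' f) := by
        refine closure_minimal ?_ (isCompact_closure_bregmanFamily.image hμ).isClosed
        rintro _ ⟨Q, ⟨hQ, hQpos⟩, rfl⟩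
        obtain ⟨P, hP, hPQ⟩ :=
          exists_mem_bregmanFamily_momentMap_eq hβ hderiv hcont hbot f hQ hQpos
        exact ⟨P, subset_closure hP, hPQ⟩

theorem stmt_8_general (hβ : ∀ z, ContinuousOn (β z) (Ici 0))
    (hconvex : ∀ z, StrictConvexOn ℝ (Ioi 0) (β z))
    (hderiv : ∀ z x, 0 < x → HasDerivAt (β z) (β' z x) x)
    (hbot : ∀ z, Tendsto (β' z) (𝓝[>] 0) atBot) (f : Z → V) :
    momentMap f '' stdSimplex ℝ Z = convexHull ℝ (range f) ∧
    ∃ h : closure (bregmanFamily β' f) ≃ₜ convexHull ℝ (range f),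
      ∀ Q : closure (bregmanFamily β' f), (h Q : V) = momentMap f Q :=
  ⟨image_momentMap_stdSimplex f,
    exists_homeomorph_of_bijOn isCompact_closure_bregmanFamily
      (continuous_momentMap f).continuousOn
      (bijOn_momentMap_closure_bregmanFamily hβ hconvex hderiv hbot f)⟩

end BregmanFamily

theorem stmt_8 {Z : Type} [Fintype Z] [Nonempty Z] {d : ℕ}
    (β β' : Z → ℝ → ℝ)
    (hβc : ∀ z, ContinuousOn (β z) (Set.Ici 0))
    (hβsc : ∀ z, StrictConvexOn ℝ (Set.Ioi 0) (β z))
    (hβd : ∀ z x, 0 < x → HasDerivAt (β z) (β' z x) x)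
    (hβ'bot : ∀ z, Filter.Tendsto (β' z) (nhdsWithin 0 (Set.Ioi 0)) Filter.atBot)
    (hβ'top : ∀ z, Filter.Tendsto (β' z) Filter.atTop Filter.atTop)
    (e : Z → ℝ → ℝ)
    (he_pos : ∀ z r, 0 < e z r)
    (he_left : ∀ z r, β' z (e z r) = r)
    (he_right : ∀ z x, 0 < x → e z (β' z x) = x)
    (f : Z → Fin d → ℝ)
    (prob : Set (Z → ℝ))
    (hprob : prob = {P : Z → ℝ | (∀ z, 0 ≤ P z) ∧ (∑ z, P z) = 1})
    (μ : (Z → ℝ) → Fin d → ℝ)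
    (hμ : ∀ P i, μ P i = ∑ z, P z * f z i)
    (Λ : (Fin d → ℝ) → ℝ)
    (hΛ : ∀ θ, (∑ z, e z ((∑ i, θ i * f z i) - Λ θ)) = 1)
    (Pθ : (Fin d → ℝ) → Z → ℝ)
    (hPθ : ∀ θ z, Pθ θ z = e z ((∑ i, θ i * f z i) - Λ θ)) :
    μ '' prob = convexHull ℝ (Set.range f) ∧
    ∃ h : ↥(closure {R : Z → ℝ | ∃ θ : Fin d → ℝ, R = Pθ θ}) ≃ₜ
          ↥(convexHull ℝ (Set.range f)),
      ∀ Q : ↥(closure {R : Z → ℝ | ∃ θ : Fin d → ℝ, R = Pθ θ}),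
        (h Q : Fin d → ℝ) = μ (Q : Z → ℝ) := by
  have hE : {R : Z → ℝ | ∃ θ : Fin d → ℝ, R = Pθ θ} = bregmanFamily β' f :=
    (Set.ext fun _ => exists_congr fun _ => eq_comm).trans <|
      range_eq_bregmanFamily
        (fun z => strictMonoOn_of_strictConvexOn_of_hasDerivAt (hβsc z) (hβd z))
        (dotProductEquiv ℝ (Fin d)).surjective (fun θ z => hPθ θ z ▸ he_pos z _)
        (fun θ => by simp only [hPθ, hΛ]) (fun θ z => by rw [hPθ, he_left]; rfl)
  have hμf : μ = momentMap f := by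
    ext P i
    simp [hμ, Fintype.linearCombination_apply]
  rw [hE, hprob, hμf]
  exact stmt_8_general hβc hβsc hβd hβ'bot f
end
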